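/- Transport relation for the harmonic connected sum: for all nonempty indices k, l, h and every positive integer N, one has Z*_N(←k; ←l; h) = Z*_N(k; ←l; h_→) + Z*_N(←k; l; h_→) + Z*_N(k; l; h_{→↑}), where h_→ appends an entry 1 at the end of h and h_{→↑} appends an entry 2 at the end of h. -/

import Mathlib

open scoped Classical

noncomputable section

/-- Last value of a tuple, with default `d` for the empty tuple. -/
def lastD {c : ℕ} (d : ℕ) (f : Fin c → ℕ) : ℕ :=
  if h : 0 < c then f ⟨c - 1, Nat.sub_lt h Nat.one_pos⟩ else d

/-- First value of a tuple, with default `d` for the empty tuple. -/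
def headD {c : ℕ} (d : ℕ) (f : Fin c → ℕ) : ℕ :=
  if h : 0 < c then f ⟨0, h⟩ else d

/-- The weight `n₁^(-(k₁-1)) · ∏_{i=2}^{a} nᵢ^(-kᵢ)` (the first exponent is lowered by 1). -/
def wtFirst (k : List ℕ) (n : Fin k.length → ℕ) : ℝ :=
  ∏ i, ((n i : ℝ) ^ (if i.1 = 0 then k.get i - 1 else k.get i))⁻¹

/-- The harmonic connected sum `Z*_N(k; l; h)`: the sum of
`n₁^(-(k₁-1)) (∏_{i≥2} nᵢ^(-kᵢ)) · m₁^(-(l₁-1)) (∏_{i≥2} mᵢ^(-lᵢ)) · ∏ rᵢ^(-hᵢ)`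
over `1 ≤ r₁ < ⋯ < r_c`, `n₁ < ⋯ < nₐ ≤ N`, `m₁ < ⋯ < m_b ≤ N` with `r_c = n₁ = m₁`. -/
def Zstar (N : ℕ) (k l h : List ℕ) : ℝ :=
  ∑' p : (Fin k.length → ℕ) × (Fin l.length → ℕ) × (Fin h.length → ℕ),
    Set.indicator
      {p : (Fin k.length → ℕ) × (Fin l.length → ℕ) × (Fin h.length → ℕ) |
        StrictMono p.1 ∧ lastD 0 p.1 ≤ N ∧ StrictMono p.2.1 ∧ lastD 0 p.2.1 ≤ N ∧
          StrictMono p.2.2 ∧ 1 ≤ headD 0 p.2.2 ∧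
          lastD 0 p.2.2 = headD 0 p.1 ∧ lastD 0 p.2.2 = headD 0 p.2.1}
      (fun p => wtFirst k p.1 * wtFirst l p.2.1 * ∏ i, ((p.2.2 i : ℝ) ^ h.get i)⁻¹) p

/-- Function-indexed weight. -/
def wtF {a : ℕ} (k n : Fin a → ℕ) : ℝ :=
  ∏ i, ((n i : ℝ) ^ (if i.1 = 0 then k i - 1 else k i))⁻¹

/-- Function-indexed version of `Zstar`. -/
def Zf (N : ℕ) {a b c : ℕ} (k : Fin a → ℕ) (l : Fin b → ℕ) (h : Fin c → ℕ) : ℝ :=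
  ∑' p : (Fin a → ℕ) × (Fin b → ℕ) × (Fin c → ℕ),
    Set.indicator
      {p : (Fin a → ℕ) × (Fin b → ℕ) × (Fin c → ℕ) |
        StrictMono p.1 ∧ lastD 0 p.1 ≤ N ∧ StrictMono p.2.1 ∧ lastD 0 p.2.1 ≤ N ∧
          StrictMono p.2.2 ∧ 1 ≤ headD 0 p.2.2 ∧
          lastD 0 p.2.2 = headD 0 p.1 ∧ lastD 0 p.2.2 = headD 0 p.2.1}
      (fun p => wtF k p.1 * wtF l p.2.1 * ∏ i, ((p.2.2 i : ℝ) ^ h i)⁻¹) p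

theorem Zstar_eq_Zf (N : ℕ) (k l h : List ℕ) {a b c : ℕ}
    (k' : Fin a → ℕ) (l' : Fin b → ℕ) (h' : Fin c → ℕ)
    (ea : a = k.length) (eb : b = l.length) (ec : c = h.length)
    (hk : ∀ i, k' i = k.get (Fin.cast ea i)) (hl : ∀ i, l' i = l.get (Fin.cast eb i))
    (hh : ∀ i, h' i = h.get (Fin.cast ec i)) :
    Zstar N k l h = Zf N k' l' h' := by
  subst ea eb ec
  obtain rfl : k' = k.get := funext hk
  obtain rfl : l' = l.get := funext hl
  obtain rfl : h' = h.get := funext hh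
  rfl

/-- The common core: all three chains are free, with a condition on the pair of heads. -/
def core (N : ℕ) {a b c : ℕ} (k : Fin (a+1) → ℕ) (l : Fin (b+1) → ℕ) (h : Fin (c+1) → ℕ)
    (C : ℕ → ℕ → Prop) (p : (Fin (a+1) → ℕ) × (Fin (b+1) → ℕ) × (Fin (c+1) → ℕ)) : ℝ :=
  if (StrictMono p.1 ∧ p.1 (Fin.last a) ≤ N ∧ StrictMono p.2.1 ∧ p.2.1 (Fin.last b) ≤ N ∧
      StrictMono p.2.2 ∧ 1 ≤ p.2.2 0 ∧ p.2.2 (Fin.last c) < p.1 0 ∧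
      p.2.2 (Fin.last c) < p.2.1 0) ∧ C (p.1 0) (p.2.1 0) then
    (∏ i, ((p.1 i : ℝ) ^ k i)⁻¹) * (∏ i, ((p.2.1 i : ℝ) ^ l i)⁻¹) *
      ∏ i, ((p.2.2 i : ℝ) ^ h i)⁻¹
  else 0

theorem core_summable (N : ℕ) {a b c : ℕ} (k : Fin (a+1) → ℕ) (l : Fin (b+1) → ℕ)
    (h : Fin (c+1) → ℕ) (C : ℕ → ℕ → Prop) : Summable (core N k l h C) := by
  apply summable_of_hasFiniteSupport
  refine Set.Finite.subset (Set.finite_Icc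
    (0 : (Fin (a+1) → ℕ) × (Fin (b+1) → ℕ) × (Fin (c+1) → ℕ))
    (fun _ => N, fun _ => N, fun _ => N)) ?_
  rintro ⟨n, m, r⟩ hp
  rw [Function.mem_support, core] at hp
  simp only [ne_eq, ite_eq_right_iff, Classical.not_imp] at hp
  obtain ⟨⟨⟨h1, h2, h3, h4, h5, h6, h7, h8⟩, -⟩, -⟩ := hp
  refine ⟨⟨fun _ => Nat.zero_le _, fun _ => Nat.zero_le _, fun _ => Nat.zero_le _⟩, ?_, ?_, ?_⟩
  · exact fun i => (h1.monotone (Fin.le_last i)).trans h2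
  · exact fun i => (h3.monotone (Fin.le_last i)).trans h4
  · intro i
    have e1 := h5.monotone (Fin.le_last i)
    have e2 := h1.monotone (Fin.zero_le (Fin.last a))
    show r i ≤ N
    omega

theorem lastD_succ {c : ℕ} (f : Fin (c+1) → ℕ) : lastD 0 f = f (Fin.last c) := by
  simp [lastD, Fin.last]

theorem headD_succ {c : ℕ} (f : Fin (c+1) → ℕ) : headD 0 f = f 0 := by
  simp [headD]

theorem sm_cons {a : ℕ} (x : ℕ) (n : Fin (a+1) → ℕ) :
    StrictMono (Fin.cons x n : Fin (a+2) → ℕ) ↔ x < n 0 ∧ StrictMono n := by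
  rw [Fin.strictMono_iff_lt_succ, Fin.strictMono_iff_lt_succ, Fin.forall_fin_succ]
  simp [← Fin.succ_castSucc, -Fin.castSucc_succ]

theorem sm_snoc {a : ℕ} (x : ℕ) (n : Fin (a+1) → ℕ) :
    StrictMono (Fin.snoc n x : Fin (a+2) → ℕ) ↔ n (Fin.last a) < x ∧ StrictMono n := by
  rw [Fin.strictMono_iff_lt_succ, Fin.strictMono_iff_lt_succ, Fin.forall_fin_succ']
  simp only [Fin.succ_castSucc, Fin.snoc_castSucc, Fin.succ_last, Fin.snoc_last]
  tauto

theorem wtF_cons {a : ℕ} (k n : Fin (a+1) → ℕ) (x : ℕ) :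
    wtF (Fin.cons 1 k : Fin (a+2) → ℕ) (Fin.cons x n) = ∏ i, ((n i : ℝ) ^ k i)⁻¹ := by
  rw [wtF, Fin.prod_univ_succ]
  simp

theorem wtF_mul {a : ℕ} (k n : Fin (a+1) → ℕ) (hk : 1 ≤ k 0) :
    wtF k n * (n 0 : ℝ)⁻¹ = ∏ i, ((n i : ℝ) ^ k i)⁻¹ := by
  rw [wtF, Fin.prod_univ_succ, Fin.prod_univ_succ]
  obtain ⟨j, hj⟩ : ∃ j, k 0 = j + 1 := ⟨k 0 - 1, by omega⟩
  simp [hj, pow_succ]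
  ring

theorem prod_snoc {c : ℕ} (h r : Fin (c+1) → ℕ) (x e : ℕ) :
    ∏ i, (((Fin.snoc r x : Fin (c+2) → ℕ) i : ℝ) ^ (Fin.snoc h e : Fin (c+2) → ℕ) i)⁻¹ =
      (∏ i, ((r i : ℝ) ^ h i)⁻¹) * ((x : ℝ) ^ e)⁻¹ := by
  rw [Fin.prod_univ_castSucc]
  simp

theorem Zf_left (N : ℕ) {a b c : ℕ} (k : Fin (a+1) → ℕ) (l : Fin (b+1) → ℕ)
    (h : Fin (c+1) → ℕ) :
    Zf N (Fin.cons 1 k : Fin (a+2) → ℕ) (Fin.cons 1 l : Fin (b+2) → ℕ) h =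
      ∑' p, core N k l h (fun _ _ => True) p := by
  let g : (Fin (a+1) → ℕ) × (Fin (b+1) → ℕ) × (Fin (c+1) → ℕ) →
      (Fin (a+2) → ℕ) × (Fin (b+2) → ℕ) × (Fin (c+1) → ℕ) :=
    fun p => (Fin.cons (p.2.2 (Fin.last c)) p.1, Fin.cons (p.2.2 (Fin.last c)) p.2.1, p.2.2)
  have hg : Function.Injective g := by
    rintro ⟨n, m, r⟩ ⟨n', m', r'⟩ e
    simp only [g, Prod.mk.injEq, Fin.cons_inj] at e
    simp [e]
  rw [Zf, ← hg.tsum_eq]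
  · refine tsum_congr ?_
    rintro ⟨n, m, r⟩
    rw [core, Set.indicator_apply]
    simp only [g, Set.mem_ofPred_eq, lastD_succ, headD_succ, sm_cons, wtF_cons, Fin.cons_zero,
      ← Fin.succ_last, Fin.cons_succ]
    refine if_congr ?_ rfl rfl
    tauto
  · rintro ⟨n, m, r⟩ hp
    have := Set.support_indicator_subset hp
    simp only [Set.mem_ofPred_eq, lastD_succ, headD_succ] at this
    refine ⟨(Fin.tail n, Fin.tail m, r), ?_⟩
    obtain ⟨-, -, -, -, -, -, h7, h8⟩ := this
    simp only [g, Prod.mk.injEq, and_true]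
    constructor
    · rw [h7, Fin.cons_self_tail]
    · rw [h8, Fin.cons_self_tail]

theorem Zf_r1 (N : ℕ) {a b c : ℕ} (k : Fin (a+1) → ℕ) (l : Fin (b+1) → ℕ)
    (h : Fin (c+1) → ℕ) (hk : 1 ≤ k 0) :
    Zf N k (Fin.cons 1 l : Fin (b+2) → ℕ) (Fin.snoc h 1 : Fin (c+2) → ℕ) =
      ∑' p, core N k l h (fun x y => x < y) p := by
  let g : (Fin (a+1) → ℕ) × (Fin (b+1) → ℕ) × (Fin (c+1) → ℕ) →
      (Fin (a+1) → ℕ) × (Fin (b+2) → ℕ) × (Fin (c+2) → ℕ) :=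
    fun p => (p.1, Fin.cons (p.1 0) p.2.1, Fin.snoc p.2.2 (p.1 0))
  have hg : Function.Injective g := by
    rintro ⟨n, m, r⟩ ⟨n', m', r'⟩ e
    simp only [g, Prod.mk.injEq, Fin.cons_inj, Fin.snoc_inj] at e
    simp [e]
  rw [Zf, ← hg.tsum_eq]
  · refine tsum_congr ?_
    rintro ⟨n, m, r⟩
    rw [core, Set.indicator_apply]
    simp only [g, Set.mem_ofPred_eq, lastD_succ, headD_succ, sm_cons, sm_snoc, wtF_cons,
      Fin.cons_zero, ← Fin.succ_last, Fin.cons_succ, prod_snoc]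
    simp only [Fin.succ_last, Fin.snoc_last, Fin.snoc_apply_zero]
    refine if_congr ?_ ?_ rfl
    · constructor
      · rintro ⟨h1, h2, ⟨h3, h4⟩, h5, ⟨h6, h7⟩, h8, -⟩
        exact ⟨⟨h1, h2, h4, h5, h7, h8, h6, h6.trans h3⟩, h3⟩
      · rintro ⟨⟨h1, h2, h4, h5, h7, h8, h6, -⟩, h3⟩
        exact ⟨h1, h2, ⟨h3, h4⟩, h5, ⟨h6, h7⟩, h8, trivial, trivial⟩
    · rw [← wtF_mul k n hk]
      ring
  · rintro ⟨n, m, r⟩ hp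
    have := Set.support_indicator_subset hp
    simp only [Set.mem_ofPred_eq, lastD_succ, headD_succ] at this
    refine ⟨(n, Fin.tail m, Fin.init r), ?_⟩
    obtain ⟨-, -, -, -, -, -, h7, h8⟩ := this
    simp only [g, Prod.mk.injEq, true_and]
    constructor
    · rw [← h7, h8, Fin.cons_self_tail]
    · rw [← h7, Fin.snoc_init_self]

theorem Zf_r2 (N : ℕ) {a b c : ℕ} (k : Fin (a+1) → ℕ) (l : Fin (b+1) → ℕ)
    (h : Fin (c+1) → ℕ) (hl : 1 ≤ l 0) :
    Zf N (Fin.cons 1 k : Fin (a+2) → ℕ) l (Fin.snoc h 1 : Fin (c+2) → ℕ) =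
      ∑' p, core N k l h (fun x y => y < x) p := by
  let g : (Fin (a+1) → ℕ) × (Fin (b+1) → ℕ) × (Fin (c+1) → ℕ) →
      (Fin (a+2) → ℕ) × (Fin (b+1) → ℕ) × (Fin (c+2) → ℕ) :=
    fun p => (Fin.cons (p.2.1 0) p.1, p.2.1, Fin.snoc p.2.2 (p.2.1 0))
  have hg : Function.Injective g := by
    rintro ⟨n, m, r⟩ ⟨n', m', r'⟩ e
    simp only [g, Prod.mk.injEq, Fin.cons_inj, Fin.snoc_inj] at e
    simp [e]
  rw [Zf, ← hg.tsum_eq]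
  · refine tsum_congr ?_
    rintro ⟨n, m, r⟩
    rw [core, Set.indicator_apply]
    simp only [g, Set.mem_ofPred_eq, lastD_succ, headD_succ, sm_cons, sm_snoc, wtF_cons,
      Fin.cons_zero, ← Fin.succ_last, Fin.cons_succ, prod_snoc]
    simp only [Fin.succ_last, Fin.snoc_last, Fin.snoc_apply_zero]
    refine if_congr ?_ ?_ rfl
    · constructor
      · rintro ⟨⟨h3, h1⟩, h2, h4, h5, ⟨h6, h7⟩, h8, -⟩
        exact ⟨⟨h1, h2, h4, h5, h7, h8, h6.trans h3, h6⟩, h3⟩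
      · rintro ⟨⟨h1, h2, h4, h5, h7, h8, -, h6⟩, h3⟩
        exact ⟨⟨h3, h1⟩, h2, h4, h5, ⟨h6, h7⟩, h8, trivial, trivial⟩
    · rw [← wtF_mul l m hl]
      ring
  · rintro ⟨n, m, r⟩ hp
    have := Set.support_indicator_subset hp
    simp only [Set.mem_ofPred_eq, lastD_succ, headD_succ] at this
    refine ⟨(Fin.tail n, m, Fin.init r), ?_⟩
    obtain ⟨-, -, -, -, -, -, h7, h8⟩ := this
    simp only [g, Prod.mk.injEq, true_and]
    constructor
    · rw [← h8, h7, Fin.cons_self_tail]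
    · rw [← h8, Fin.snoc_init_self]

theorem Zf_r3 (N : ℕ) {a b c : ℕ} (k : Fin (a+1) → ℕ) (l : Fin (b+1) → ℕ)
    (h : Fin (c+1) → ℕ) (hk : 1 ≤ k 0) (hl : 1 ≤ l 0) :
    Zf N k l (Fin.snoc h 2 : Fin (c+2) → ℕ) =
      ∑' p, core N k l h (fun x y => x = y) p := by
  let g : (Fin (a+1) → ℕ) × (Fin (b+1) → ℕ) × (Fin (c+1) → ℕ) →
      (Fin (a+1) → ℕ) × (Fin (b+1) → ℕ) × (Fin (c+2) → ℕ) :=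
    fun p => (p.1, p.2.1, Fin.snoc p.2.2 (p.1 0))
  have hg : Function.Injective g := by
    rintro ⟨n, m, r⟩ ⟨n', m', r'⟩ e
    simp only [g, Prod.mk.injEq, Fin.snoc_inj] at e
    simp [e]
  rw [Zf, ← hg.tsum_eq]
  · refine tsum_congr ?_
    rintro ⟨n, m, r⟩
    rw [core, Set.indicator_apply]
    simp only [g, Set.mem_ofPred_eq, lastD_succ, headD_succ, sm_snoc, prod_snoc]
    simp only [Fin.snoc_last, Fin.snoc_apply_zero]
    by_cases hnm : n 0 = m 0
    · refine if_congr ?_ ?_ rfl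
      · constructor
        · rintro ⟨h1, h2, h4, h5, ⟨h6, h7⟩, h8, -⟩
          exact ⟨⟨h1, h2, h4, h5, h7, h8, h6, hnm ▸ h6⟩, hnm⟩
        · rintro ⟨⟨h1, h2, h4, h5, h7, h8, h6, -⟩, h3⟩
          exact ⟨h1, h2, h4, h5, ⟨h6, h7⟩, h8, trivial, hnm⟩
      · rw [← wtF_mul k n hk, ← wtF_mul l m hl, ← hnm]
        ring
    · rw [if_neg (by tauto), if_neg (by tauto)]
  · rintro ⟨n, m, r⟩ hp
    have := Set.support_indicator_subset hp
    simp only [Set.mem_ofPred_eq, lastD_succ, headD_succ] at this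
    refine ⟨(n, m, Fin.init r), ?_⟩
    obtain ⟨-, -, -, -, -, -, h7, h8⟩ := this
    simp only [g, Prod.mk.injEq, true_and]
    rw [← h7, Fin.snoc_init_self]

theorem Zf_transport (N : ℕ) {a b c : ℕ} (k : Fin (a+1) → ℕ) (l : Fin (b+1) → ℕ)
    (h : Fin (c+1) → ℕ) (hk : 1 ≤ k 0) (hl : 1 ≤ l 0) :
    Zf N (Fin.cons 1 k : Fin (a+2) → ℕ) (Fin.cons 1 l : Fin (b+2) → ℕ) h =
      Zf N k (Fin.cons 1 l : Fin (b+2) → ℕ) (Fin.snoc h 1 : Fin (c+2) → ℕ) +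
      Zf N (Fin.cons 1 k : Fin (a+2) → ℕ) l (Fin.snoc h 1 : Fin (c+2) → ℕ) +
      Zf N k l (Fin.snoc h 2 : Fin (c+2) → ℕ) := by
  rw [Zf_left, Zf_r1 N k l h hk, Zf_r2 N k l h hl, Zf_r3 N k l h hk hl,
    ← (core_summable N k l h _).tsum_add (core_summable N k l h _),
    ← ((core_summable N k l h _).add (core_summable N k l h _)).tsum_add
      (core_summable N k l h _)]
  refine tsum_congr fun p => ?_
  simp only [core]
  rcases lt_trichotomy (p.1 0) (p.2.1 0) with e | e | e
  · simp [e, e.ne, e.not_gt]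
  · simp [e]
  · simp [e, e.ne', e.not_gt]

theorem snoc_get (y : ℕ) (h : List ℕ) (e : ℕ) (ec : h.length + 2 = (y :: h ++ [e]).length)
    (i : Fin (h.length + 2)) :
    (Fin.snoc (y :: h).get e : Fin (h.length + 2) → ℕ) i = (y :: h ++ [e]).get (Fin.cast ec i) := by
  refine Fin.lastCases ?_ (fun j => ?_) i
  · rw [Fin.snoc_last]
    simp
  · rw [Fin.snoc_castSucc]
    simp only [List.get_eq_getElem, Fin.val_cast, Fin.val_castSucc]
    rw [List.getElem_append_left]

theorem cons_get (y : ℕ) (h : List ℕ) (e : ℕ) (ec : h.length + 2 = (e :: y :: h).length)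
    (i : Fin (h.length + 2)) :
    (Fin.cons e (y :: h).get : Fin (h.length + 2) → ℕ) i = (e :: y :: h).get (Fin.cast ec i) := by
  refine Fin.cases ?_ (fun j => ?_) i
  · rfl
  · rfl

/-- **Transport relation for the harmonic connected sum:**
`Z*_N(←k; ←l; h) = Z*_N(k; ←l; h_→) + Z*_N(←k; l; h_→) + Z*_N(k; l; h_{→↑})`
for nonempty indices `k`, `l`, `h` and `N ≥ 1`; here `←k = 1 :: k`,
`h_→ = h ++ [1]` and `h_{→↑} = h ++ [2]`. -/
theorem Zstar_transport (N : ℕ) (hN : 0 < N) (k l h : List ℕ)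
    (hk : k ≠ []) (hk1 : ∀ i ∈ k, 1 ≤ i)
    (hl : l ≠ []) (hl1 : ∀ i ∈ l, 1 ≤ i)
    (hh : h ≠ []) (hh1 : ∀ i ∈ h, 1 ≤ i) :
    Zstar N (1 :: k) (1 :: l) h =
      Zstar N k (1 :: l) (h ++ [1]) + Zstar N (1 :: k) l (h ++ [1]) +
        Zstar N k l (h ++ [2]) := by
  obtain _ | ⟨x, k⟩ := k
  · exact absurd rfl hk
  obtain _ | ⟨y, l⟩ := l
  · exact absurd rfl hl
  obtain _ | ⟨z, h⟩ := h
  · exact absurd rfl hh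
  have key := Zf_transport N (x :: k).get (y :: l).get (z :: h).get
    (hk1 x (by simp)) (hl1 y (by simp))
  have e1 : h.length + 2 = (z :: h ++ [1]).length := by simp
  have e2 : h.length + 2 = (z :: h ++ [2]).length := by simp
  rw [Zstar_eq_Zf N (1 :: x :: k) (1 :: y :: l) (z :: h) _ _ _ rfl rfl rfl
      (cons_get x k 1 rfl) (cons_get y l 1 rfl) (fun _ => rfl),
    Zstar_eq_Zf N (x :: k) (1 :: y :: l) (z :: h ++ [1]) _ _ _ rfl rfl e1
      (fun _ => rfl) (cons_get y l 1 rfl) (snoc_get z h 1 e1),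
    Zstar_eq_Zf N (1 :: x :: k) (y :: l) (z :: h ++ [1]) _ _ _ rfl rfl e1
      (cons_get x k 1 rfl) (fun _ => rfl) (snoc_get z h 1 e1),
    Zstar_eq_Zf N (x :: k) (y :: l) (z :: h ++ [2]) _ _ _ rfl rfl e2
      (fun _ => rfl) (fun _ => rfl) (snoc_get z h 2 e2)]
  exact key
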